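/- Directional convergence of gradient descent to the minimizer of the recession function (Euclidean case of Theorem 3.7(2)): suppose κ* := inf_{y ∈ ℝⁿ} ‖∇f(y)‖ > 0 and let (x_i) be the gradient-descent sequence with step size 1/L from any initial point x₀. Then ‖x_i‖ → ∞ as i → ∞, and x_i/‖x_i‖ converges to a unit vector ξ* satisfying f^∞(ξ*) = −κ*; moreover ξ* is the unique unit vector u with f^∞(u) ≤ −κ*. -/

import Mathlib

open Filter
open scoped RealInnerProductSpace

/-- The recession function (asymptotic slope) of `f`:
`f^∞(u) = sup_{s>0} (f(su) - f(0))/s`, valued in `EReal`. -/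
noncomputable def recessionFn {n : ℕ} (f : EuclideanSpace ℝ (Fin n) → ℝ)
    (u : EuclideanSpace ℝ (Fin n)) : EReal :=
  ⨆ (s : ℝ) (_ : 0 < s), (((f (s • u) - f 0) / s : ℝ) : EReal)

/-!
For convex `L`-smooth `f`, the set `closure (range ∇f)` is convex: it is the closure of the domain
of the conjugate `f*`, because smoothness forces `∇f - p` to be arbitrarily small as soon as
`f - ⟪p, ·⟫` is bounded below. It therefore has a unique point `q` of minimal norm, and `‖q‖ = κ*`.
By cocoercivity of `∇f`, the gradients along any two runs of gradient descent approach each other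
and have nonincreasing norms, so `‖∇f (x i)‖ → κ*`. Since gradients of almost minimal norm are close
to `q`, it follows that `∇f (x i) → q`, and averaging the steps gives `x i / i → -q / L`. Finally
`f^∞` is the support function of `range ∇f`, so it takes the value `-κ*` at `-q / κ*`, and the
equality case of Cauchy–Schwarz gives uniqueness.
-/

lemma bddBelow_range_norm {ι E : Type*} [SeminormedAddGroup E] (w : ι → E) :
    BddBelow (Set.range fun i => ‖w i‖) :=
  ⟨0, Set.forall_mem_range.2 fun i => norm_nonneg (w i)⟩

section DirectionOfGrowth

open Topology

variable {E : Type*} [NormedAddCommGroup E] [NormedSpace ℝ E]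

lemma tendsto_inv_smul_of_tendsto_sub {x : ℕ → E} {v : E}
    (h : Tendsto (fun i => x (i + 1) - x i) atTop (𝓝 v)) :
    Tendsto (fun i : ℕ => (i : ℝ)⁻¹ • x i) atTop (𝓝 v) := by
  have hinit : Tendsto (fun i : ℕ => (i : ℝ)⁻¹ • x 0) atTop (𝓝 0) := by
    simpa only [zero_smul] using (tendsto_inv_atTop_nhds_zero_nat (𝕜 := ℝ)).smul_const (x 0)
  simpa only [Finset.sum_range_sub, smul_sub, sub_add_cancel, add_zero]
    using h.cesaro_smul.add hinit

lemma tendsto_norm_atTop_of_tendsto_inv_smul {x : ℕ → E} {v : E} (hv : v ≠ 0)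
    (h : Tendsto (fun i : ℕ => (i : ℝ)⁻¹ • x i) atTop (𝓝 v)) :
    Tendsto (fun i => ‖x i‖) atTop atTop := by
  refine (tendsto_natCast_atTop_atTop.atTop_mul_pos (norm_pos_iff.2 hv) h.norm).congr' ?_
  filter_upwards [eventually_ne_atTop 0] with i hi
  rw [norm_smul, norm_inv, Real.norm_natCast, mul_inv_cancel_left₀ (Nat.cast_ne_zero.2 hi)]

lemma tendsto_normalize_of_tendsto_inv_smul {x : ℕ → E} {v : E} (hv : v ≠ 0)
    (h : Tendsto (fun i : ℕ => (i : ℝ)⁻¹ • x i) atTop (𝓝 v)) :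
    Tendsto (fun i => NormedSpace.normalize (x i)) atTop (𝓝 (NormedSpace.normalize v)) := by
  refine ((h.norm.inv₀ (norm_ne_zero_iff.2 hv)).smul h).congr' ?_
  filter_upwards [eventually_gt_atTop 0] with i hi
  exact NormedSpace.normalize_smul_of_pos (inv_pos.2 (Nat.cast_pos.2 hi)) (x i)

end DirectionOfGrowth

section MinimalNorm

open Topology

variable {E : Type*} [NormedAddCommGroup E] [InnerProductSpace ℝ E]

lemma exists_mem_forall_sq_norm_le_inner {K : Set E} (hne : K.Nonempty) (hK : IsComplete K)
    (hconv : Convex ℝ K) : ∃ q ∈ K, ∀ p ∈ K, ‖q‖ ^ 2 ≤ ⟪p, q⟫ := by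
  obtain ⟨q, hqK, hq⟩ := exists_norm_eq_iInf_of_complete_convex hne hK hconv 0
  refine ⟨q, hqK, fun p hp => ?_⟩
  have hvar := (norm_eq_iInf_iff_real_inner_le_zero hconv hqK).1 hq p hp
  rw [zero_sub, inner_neg_left, inner_sub_right, real_inner_self_eq_norm_sq,
    real_inner_comm] at hvar
  linarith

lemma norm_le_of_sq_norm_le_inner {p q : E} (h : ‖q‖ ^ 2 ≤ ⟪p, q⟫) : ‖q‖ ≤ ‖p‖ := by
  rcases (norm_nonneg q).eq_or_lt with hq | hq
  · exact hq ▸ norm_nonneg p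
  · exact le_of_mul_le_mul_right (by linarith [real_inner_le_norm p q]) hq

lemma tendsto_of_sq_norm_le_inner_of_tendsto_norm {ι : Type*} {l : Filter ι} {p : ι → E} {q : E}
    (h : ∀ i, ‖q‖ ^ 2 ≤ ⟪p i, q⟫) (hnorm : Tendsto (fun i => ‖p i‖) l (𝓝 ‖q‖)) :
    Tendsto p l (𝓝 q) := by
  have hgap : Tendsto (fun i => √(‖p i‖ ^ 2 - ‖q‖ ^ 2)) l (𝓝 0) := by
    have hsq := ((hnorm.pow 2).sub_const (‖q‖ ^ 2)).sqrt
    rwa [sub_self, Real.sqrt_zero] at hsq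
  refine tendsto_iff_norm_sub_tendsto_zero.2
    (squeeze_zero (fun i => norm_nonneg _) (fun i => Real.le_sqrt_of_sq_le ?_) hgap)
  rw [norm_sub_sq_real]
  linarith [h i]

end MinimalNorm

/-- A map `g` is `β`-cocoercive (inverse strongly monotone). By Baillon–Haddad this holds with
`β = 1 / L` for the gradient of a convex `L`-smooth function, and it is all that is needed of the
gradient to control its norm along gradient descent. -/
def IsCocoercive {E : Type*} [NormedAddCommGroup E] [InnerProductSpace ℝ E] (β : ℝ) (g : E → E) :
    Prop :=
  ∀ y z, β * ‖g y - g z‖ ^ 2 ≤ ⟪g y - g z, y - z⟫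

namespace IsCocoercive

open Topology

variable {E : Type*} [NormedAddCommGroup E] [InnerProductSpace ℝ E] {β : ℝ} {g : E → E}
  {x : ℕ → E}

lemma sq_norm_step_sub_step_add_le (hg : IsCocoercive β g) (hβ : 0 ≤ β) (y z : E) :
    ‖(y - β • g y) - (z - β • g z)‖ ^ 2 + β ^ 2 * ‖g y - g z‖ ^ 2 ≤ ‖y - z‖ ^ 2 := by
  have hstep : (y - β • g y) - (z - β • g z) = (y - z) - β • (g y - g z) := by module
  rw [hstep, norm_sub_sq_real, inner_smul_right, norm_smul, mul_pow, Real.norm_eq_abs, sq_abs,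
    real_inner_comm]
  linarith [mul_le_mul_of_nonneg_left (hg y z) hβ]

lemma antitone_norm_orbit (hg : IsCocoercive β g) (hβ : 0 < β)
    (hx : ∀ i, x (i + 1) = x i - β • g (x i)) : Antitone fun i => ‖g (x i)‖ := by
  refine antitone_nat_of_succ_le fun i => ?_
  have hstep (j : ℕ) : ‖x (j + 1) - x j‖ = β * ‖g (x j)‖ := by
    rw [hx j, sub_sub_cancel_left, norm_neg, norm_smul, Real.norm_of_nonneg hβ.le]
  have hsteps : ‖x (i + 1 + 1) - x (i + 1)‖ ≤ ‖x (i + 1) - x i‖ := by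
    have h := hg.sq_norm_step_sub_step_add_le hβ.le (x (i + 1)) (x i)
    rw [← hx, ← hx] at h
    exact le_of_sq_le_sq (le_of_add_le_of_nonneg_left h (by positivity)) (norm_nonneg _)
  rw [hstep, hstep] at hsteps
  exact le_of_mul_le_mul_left hsteps hβ

lemma tendsto_norm_sub_orbits (hg : IsCocoercive β g) (hβ : 0 < β) {y : ℕ → E}
    (hx : ∀ i, x (i + 1) = x i - β • g (x i)) (hy : ∀ i, y (i + 1) = y i - β • g (y i)) :
    Tendsto (fun i => ‖g (x i) - g (y i)‖) atTop (𝓝 0) := by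
  have hdrop (i : ℕ) : β ^ 2 * ‖g (x i) - g (y i)‖ ^ 2
      ≤ ‖x i - y i‖ ^ 2 - ‖x (i + 1) - y (i + 1)‖ ^ 2 := by
    rw [hx, hy]
    linarith [hg.sq_norm_step_sub_step_add_le hβ.le (x i) (y i)]
  have hsum : Summable fun i => β ^ 2 * ‖g (x i) - g (y i)‖ ^ 2 := by
    refine summable_of_sum_range_le (c := ‖x 0 - y 0‖ ^ 2) (fun i => by positivity) fun m => ?_
    calc ∑ i ∈ Finset.range m, β ^ 2 * ‖g (x i) - g (y i)‖ ^ 2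
        ≤ ∑ i ∈ Finset.range m, (‖x i - y i‖ ^ 2 - ‖x (i + 1) - y (i + 1)‖ ^ 2) :=
          Finset.sum_le_sum fun i _ => hdrop i
      _ = ‖x 0 - y 0‖ ^ 2 - ‖x m - y m‖ ^ 2 :=
          Finset.sum_range_sub' (fun i => ‖x i - y i‖ ^ 2) m
      _ ≤ ‖x 0 - y 0‖ ^ 2 := sub_le_self _ (sq_nonneg _)
  have hsq := ((summable_mul_left_iff (by positivity)).1 hsum).tendsto_atTop_zero
  simpa using hsq.sqrt

lemma tendsto_norm_orbit (hg : IsCocoercive β g) (hβ : 0 < β)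
    (hx : ∀ i, x (i + 1) = x i - β • g (x i)) :
    Tendsto (fun i => ‖g (x i)‖) atTop (𝓝 (⨅ y, ‖g y‖)) := by
  have hlim := tendsto_atTop_ciInf (hg.antitone_norm_orbit hβ hx)
    (bddBelow_range_norm fun i => g (x i))
  suffices h : ⨅ i, ‖g (x i)‖ = ⨅ y, ‖g y‖ from h ▸ hlim
  refine le_antisymm (le_ciInf fun y₀ => ?_)
    (le_ciInf fun i => ciInf_le (bddBelow_range_norm g) (x i))
  let y (i : ℕ) : E := (fun z => z - β • g z)^[i] y₀
  have hy (i : ℕ) : y (i + 1) = y i - β • g (y i) := Function.iterate_succ_apply' _ i y₀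
  have hbound (i : ℕ) : ‖g (x i)‖ ≤ ‖g y₀‖ + ‖g (x i) - g (y i)‖ :=
    (norm_le_insert' _ _).trans
      (add_le_add_left (hg.antitone_norm_orbit hβ hy (Nat.zero_le i)) _)
  exact le_of_tendsto_of_tendsto' hlim
    (by simpa only [add_zero] using (hg.tendsto_norm_sub_orbits hβ hx hy).const_add ‖g y₀‖) hbound

end IsCocoercive

/-- The effective domain of the convex conjugate `f*`: the slopes `p` for which `f` has an affine
minorant `⟪p, ·⟫ + b`. -/
def conjugateDomain {E : Type*} [NormedAddCommGroup E] [InnerProductSpace ℝ E] (f : E → ℝ) :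
    Set E :=
  {p | BddBelow (Set.range fun z => f z - ⟪p, z⟫)}

lemma convex_conjugateDomain {E : Type*} [NormedAddCommGroup E] [InnerProductSpace ℝ E]
    (f : E → ℝ) : Convex ℝ (conjugateDomain f) := by
  rintro p ⟨b, hb⟩ p' ⟨b', hb'⟩ s t hs ht hst
  refine ⟨s * b + t * b', Set.forall_mem_range.2 fun z => ?_⟩
  calc s * b + t * b'
      ≤ s * (f z - ⟪p, z⟫) + t * (f z - ⟪p', z⟫) := by
        gcongr
        · exact hb (Set.mem_range_self z)
        · exact hb' (Set.mem_range_self z)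
    _ = (s + t) * f z - ⟪s • p + t • p', z⟫ := by
        rw [inner_add_left, real_inner_smul_left, real_inner_smul_left]
        ring
    _ = f z - ⟪s • p + t • p', z⟫ := by rw [hst, one_mul]

section Gradient

open Topology Gradient

variable {E : Type*} [NormedAddCommGroup E] [InnerProductSpace ℝ E] [CompleteSpace E]
  {f : E → ℝ} {L : ℝ}

lemma hasDerivAt_comp_add_smul {y d : E} {t : ℝ} (hdiff : DifferentiableAt ℝ f (y + t • d)) :
    HasDerivAt (fun s : ℝ => f (y + s • d)) ⟪∇ f (y + t • d), d⟫ t := by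
  have hline : HasDerivAt (fun s : ℝ => y + s • d) d t := by
    simpa only [id_eq, one_smul] using ((hasDerivAt_id t).smul_const d).const_add y
  exact hdiff.hasGradientAt.hasFDerivAt.comp_hasDerivAt t hline

lemma sub_inner_gradient_le (hconv : ConvexOn ℝ Set.univ f) {y : E}
    (hdiff : DifferentiableAt ℝ f y) (z : E) : f y - ⟪∇ f y, y⟫ ≤ f z - ⟪∇ f y, z⟫ := by
  have hline : ConvexOn ℝ Set.univ fun t : ℝ => f (y + t • (z - y)) := by
    convert! hconv.comp_affineMap (AffineMap.lineMap y z : ℝ →ᵃ[ℝ] E) using 2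
    rw [Function.comp_apply, AffineMap.lineMap_apply, vsub_eq_sub, vadd_eq_add, add_comm]
  have hderiv : HasDerivAt (fun t : ℝ => f (y + t • (z - y))) ⟪∇ f y, z - y⟫ 0 := by
    simpa only [zero_smul, add_zero] using
      hasDerivAt_comp_add_smul (d := z - y) (t := 0) (by rwa [zero_smul, add_zero])
  have hslope := hline.le_slope_of_hasDerivAt (Set.mem_univ 0) (Set.mem_univ 1) one_pos hderiv
  simp only [slope_def_field, zero_smul, add_zero, one_smul, add_sub_cancel, sub_zero,
    div_one, inner_sub_right] at hslope
  linarith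

lemma le_add_inner_gradient_add_sq (hdiff : Differentiable ℝ f)
    (hsmooth : ∀ y z, ‖∇ f y - ∇ f z‖ ≤ L * ‖y - z‖) (y d : E) :
    f (y + d) ≤ f y + ⟪∇ f y, d⟫ + L / 2 * ‖d‖ ^ 2 := by
  let B (t : ℝ) : ℝ := f y + ⟪∇ f y, d⟫ * t + L / 2 * ‖d‖ ^ 2 * t ^ 2
  have hB (t : ℝ) : HasDerivAt B (⟪∇ f y, d⟫ + L * ‖d‖ ^ 2 * t) t := by
    refine ((((hasDerivAt_id t).const_mul ⟪∇ f y, d⟫).const_add (f y)).add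
      ((hasDerivAt_pow 2 t).const_mul (L / 2 * ‖d‖ ^ 2))).congr_deriv ?_
    push_cast
    ring
  have hslope (t : ℝ) (ht : 0 ≤ t) : ⟪∇ f (y + t • d), d⟫ ≤ ⟪∇ f y, d⟫ + L * ‖d‖ ^ 2 * t := by
    have hgrad : ‖∇ f (y + t • d) - ∇ f y‖ ≤ L * (t * ‖d‖) := by
      simpa only [add_sub_cancel_left, norm_smul, Real.norm_of_nonneg ht]
        using hsmooth (y + t • d) y
    have hinner : ⟪∇ f (y + t • d) - ∇ f y, d⟫ ≤ L * (t * ‖d‖) * ‖d‖ :=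
      (real_inner_le_norm _ _).trans (mul_le_mul_of_nonneg_right hgrad (norm_nonneg d))
    rw [inner_sub_left] at hinner
    linarith
  have hf (t : ℝ) := hasDerivAt_comp_add_smul (hdiff (y + t • d))
  have hle := image_le_of_deriv_right_le_deriv_boundary (a := 0) (b := 1)
    (fun t _ => (hf t).continuousAt.continuousWithinAt) (fun t _ => (hf t).hasDerivWithinAt)
    (by simp [B]) (fun t _ => (hB t).continuousAt.continuousWithinAt)
    (fun t _ => (hB t).hasDerivWithinAt) (fun t ht => hslope t ht.1)
    (Set.right_mem_Icc.2 zero_le_one)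
  simpa only [B, one_smul, mul_one, one_pow] using hle

/-- A gradient step on `f - ⟪p, ·⟫` lowers its value by at least `‖∇ f y - p‖ ^ 2 / (2 * L)`. -/
lemma sq_norm_gradient_sub_le (hL : 0 < L) (hdiff : Differentiable ℝ f)
    (hsmooth : ∀ y z, ‖∇ f y - ∇ f z‖ ≤ L * ‖y - z‖) {p : E} {b : ℝ}
    (hb : ∀ z, b ≤ f z - ⟪p, z⟫) (y : E) :
    ‖∇ f y - p‖ ^ 2 ≤ 2 * L * (f y - ⟪p, y⟫ - b) := by
  set w := ∇ f y - p with hw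
  have hdescent := le_add_inner_gradient_add_sq hdiff hsmooth y (-(1 / L) • w)
  have hstep := hb (y + -(1 / L) • w)
  have hself : 1 / L * ⟪∇ f y, w⟫ - 1 / L * ⟪p, w⟫ = 1 / L * ‖w‖ ^ 2 := by
    rw [← mul_sub, ← inner_sub_left, ← hw, real_inner_self_eq_norm_sq]
  rw [inner_smul_right, norm_smul, mul_pow, Real.norm_eq_abs, sq_abs] at hdescent
  rw [inner_add_right, inner_smul_right] at hstep
  have hdecrease : 1 / L * ‖w‖ ^ 2 - L / 2 * ((-(1 / L)) ^ 2 * ‖w‖ ^ 2) ≤ f y - ⟪p, y⟫ - b := by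
    linarith
  calc ‖w‖ ^ 2 = 2 * L * (1 / L * ‖w‖ ^ 2 - L / 2 * ((-(1 / L)) ^ 2 * ‖w‖ ^ 2)) := by
        field_simp
        ring
    _ ≤ 2 * L * (f y - ⟪p, y⟫ - b) := by gcongr

lemma isCocoercive_gradient (hL : 0 < L) (hconv : ConvexOn ℝ Set.univ f)
    (hdiff : Differentiable ℝ f) (hsmooth : ∀ y z, ‖∇ f y - ∇ f z‖ ≤ L * ‖y - z‖) :
    IsCocoercive (1 / L) (∇ f) := by
  intro y z
  have hbregman (a b : E) : ‖∇ f b - ∇ f a‖ ^ 2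
      ≤ 2 * L * (f b - ⟪∇ f a, b⟫ - (f a - ⟪∇ f a, a⟫)) :=
    sq_norm_gradient_sub_le hL hdiff hsmooth (sub_inner_gradient_le hconv (hdiff a)) b
  have hyz := hbregman y z
  rw [norm_sub_rev] at hyz
  rw [one_div_mul_eq_div, div_le_iff₀' hL, inner_sub_left, inner_sub_right, inner_sub_right]
  linarith [hbregman z y]

lemma gradient_mem_conjugateDomain (hconv : ConvexOn ℝ Set.univ f) {y : E}
    (hdiff : DifferentiableAt ℝ f y) : ∇ f y ∈ conjugateDomain f :=
  ⟨f y - ⟪∇ f y, y⟫, Set.forall_mem_range.2 (sub_inner_gradient_le hconv hdiff)⟩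

lemma conjugateDomain_subset_closure_range_gradient (hL : 0 < L) (hdiff : Differentiable ℝ f)
    (hsmooth : ∀ y z, ‖∇ f y - ∇ f z‖ ≤ L * ‖y - z‖) :
    conjugateDomain f ⊆ closure (Set.range (∇ f)) := by
  intro p hp
  refine Metric.mem_closure_range_iff.2 fun ε hε => ?_
  obtain ⟨y, hy⟩ := exists_lt_of_ciInf_lt
    (lt_add_of_pos_right (⨅ z, f z - ⟪p, z⟫) (show 0 < ε ^ 2 / (2 * L) by positivity))
  refine ⟨y, ?_⟩
  rw [dist_comm, dist_eq_norm]
  refine lt_of_pow_lt_pow_left₀ 2 hε.le ?_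
  calc ‖∇ f y - p‖ ^ 2 ≤ 2 * L * (f y - ⟪p, y⟫ - ⨅ z, f z - ⟪p, z⟫) :=
        sq_norm_gradient_sub_le hL hdiff hsmooth (ciInf_le hp) y
    _ < 2 * L * (ε ^ 2 / (2 * L)) := by
        gcongr
        linarith
    _ = ε ^ 2 := by field_simp

lemma convex_closure_range_gradient (hL : 0 < L) (hconv : ConvexOn ℝ Set.univ f)
    (hdiff : Differentiable ℝ f) (hsmooth : ∀ y z, ‖∇ f y - ∇ f z‖ ≤ L * ‖y - z‖) :
    Convex ℝ (closure (Set.range (∇ f))) := by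
  have heq : closure (Set.range (∇ f)) = closure (conjugateDomain f) :=
    (closure_mono (Set.range_subset_iff.2 fun y =>
      gradient_mem_conjugateDomain hconv (hdiff y))).antisymm
      (closure_minimal (conjugateDomain_subset_closure_range_gradient hL hdiff hsmooth)
        isClosed_closure)
  exact heq ▸ (convex_conjugateDomain f).closure

lemma exists_mem_closure_range_gradient_norm_eq_iInf (hL : 0 < L)
    (hconv : ConvexOn ℝ Set.univ f) (hdiff : Differentiable ℝ f)
    (hsmooth : ∀ y z, ‖∇ f y - ∇ f z‖ ≤ L * ‖y - z‖) :
    ∃ q ∈ closure (Set.range (∇ f)), ‖q‖ = ⨅ y, ‖∇ f y‖ ∧ ∀ y, ‖q‖ ^ 2 ≤ ⟪∇ f y, q⟫ := by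
  obtain ⟨q, hq, hmin⟩ := exists_mem_forall_sq_norm_le_inner (Set.range_nonempty (∇ f)).closure
    isClosed_closure.isComplete (convex_closure_range_gradient hL hconv hdiff hsmooth)
  have hinner (y : E) : ‖q‖ ^ 2 ≤ ⟪∇ f y, q⟫ := hmin _ (subset_closure (Set.mem_range_self y))
  have hge : closure (Set.range (∇ f)) ⊆ {p | ⨅ y, ‖∇ f y‖ ≤ ‖p‖} :=
    closure_minimal (Set.range_subset_iff.2 (ciInf_le (bddBelow_range_norm (∇ f))))
      (isClosed_le continuous_const continuous_norm)
  exact ⟨q, hq, (le_ciInf fun y => norm_le_of_sq_norm_le_inner (hinner y)).antisymm (hge hq),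
    hinner⟩

end Gradient

/-- The recession function `f^∞` of `recessionFn`, for a function on an arbitrary real vector
space. -/
noncomputable def recessionFunction {E : Type*} [AddCommGroup E] [Module ℝ E] (f : E → ℝ) (u : E) :
    EReal :=
  ⨆ (s : ℝ) (_ : 0 < s), (((f (s • u) - f 0) / s : ℝ) : EReal)

section RecessionFunction

open Topology Gradient

variable {E : Type*} [NormedAddCommGroup E] [InnerProductSpace ℝ E] {f : E → ℝ}

lemma inner_le_recessionFunction_of_mem_conjugateDomain {p : E} (hp : p ∈ conjugateDomain f)
    (u : E) : ((⟪p, u⟫ : ℝ) : EReal) ≤ recessionFunction f u := by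
  obtain ⟨b, hb⟩ := hp
  have hlim : Tendsto (fun s : ℝ => ⟪p, u⟫ + (b - f 0) / s) atTop (𝓝 ⟪p, u⟫) := by
    simpa only [add_zero, id_eq]
      using ((tendsto_id (α := ℝ)).const_div_atTop (b - f 0)).const_add ⟪p, u⟫
  refine le_of_tendsto (continuous_coe_real_ereal.continuousAt.tendsto.comp hlim) ?_
  filter_upwards [eventually_gt_atTop 0] with s hs
  refine le_iSup₂_of_le s hs (EReal.coe_le_coe_iff.2 ?_)
  have hminorant : b ≤ f (s • u) - s * ⟪p, u⟫ := by
    simpa only [real_inner_smul_right] using hb (Set.mem_range_self (s • u))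
  rw [le_div_iff₀ hs, add_mul, div_mul_cancel₀ _ hs.ne']
  linarith

variable [CompleteSpace E]

lemma inner_le_recessionFunction_of_mem_closure_range_gradient (hconv : ConvexOn ℝ Set.univ f)
    (hdiff : Differentiable ℝ f) {p : E} (hp : p ∈ closure (Set.range (∇ f))) (u : E) :
    ((⟪p, u⟫ : ℝ) : EReal) ≤ recessionFunction f u := by
  have hclosed : IsClosed {p : E | ((⟪p, u⟫ : ℝ) : EReal) ≤ recessionFunction f u} :=
    isClosed_le (continuous_coe_real_ereal.comp (by fun_prop)) continuous_const
  refine closure_minimal (Set.range_subset_iff.2 fun y => ?_) hclosed hp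
  exact inner_le_recessionFunction_of_mem_conjugateDomain
    (gradient_mem_conjugateDomain hconv (hdiff y)) u

lemma recessionFunction_le_of_forall_inner_gradient_le (hconv : ConvexOn ℝ Set.univ f)
    (hdiff : Differentiable ℝ f) {u : E} {c : ℝ} (h : ∀ y, ⟪∇ f y, u⟫ ≤ c) :
    recessionFunction f u ≤ c := by
  refine iSup₂_le fun s hs => EReal.coe_le_coe_iff.2 ((div_le_iff₀ hs).2 ?_)
  have hgrad := sub_inner_gradient_le hconv (hdiff (s • u)) 0
  rw [inner_zero_right, inner_smul_right] at hgrad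
  linarith [mul_le_mul_of_nonneg_left (h (s • u)) hs.le]

lemma recessionFunction_neg_normalize_eq (hconv : ConvexOn ℝ Set.univ f)
    (hdiff : Differentiable ℝ f) {q : E} (hq : q ∈ closure (Set.range (∇ f))) (hq0 : q ≠ 0)
    (hmin : ∀ y, ‖q‖ ^ 2 ≤ ⟪∇ f y, q⟫) :
    recessionFunction f (-NormedSpace.normalize q) = ((-‖q‖ : ℝ) : EReal) := by
  have hinner (p : E) : ⟪p, -NormedSpace.normalize q⟫ = -(⟪p, q⟫ / ‖q‖) := by
    rw [inner_neg_right, NormedSpace.normalize, real_inner_smul_right, inv_mul_eq_div]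
  have hpos := norm_pos_iff.2 hq0
  refine le_antisymm ?_ ?_
  · refine recessionFunction_le_of_forall_inner_gradient_le hconv hdiff fun y => ?_
    rw [hinner, neg_le_neg_iff, le_div_iff₀ hpos, ← sq]
    exact hmin y
  · have hsupport := inner_le_recessionFunction_of_mem_closure_range_gradient hconv hdiff hq
      (-NormedSpace.normalize q)
    rwa [hinner, real_inner_self_eq_norm_sq, sq, mul_self_div_self] at hsupport

lemma eq_neg_normalize_of_recessionFunction_le (hconv : ConvexOn ℝ Set.univ f)
    (hdiff : Differentiable ℝ f) {q : E} (hq : q ∈ closure (Set.range (∇ f))) (hq0 : q ≠ 0)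
    {u : E} (hu : ‖u‖ = 1) (hle : recessionFunction f u ≤ ((-‖q‖ : ℝ) : EReal)) :
    u = -NormedSpace.normalize q := by
  have hqu : ⟪q, u⟫ ≤ -‖q‖ := EReal.coe_le_coe_iff.1
    ((inner_le_recessionFunction_of_mem_closure_range_gradient hconv hdiff hq u).trans hle)
  have hqu_eq : ⟪-q, u⟫ = ‖-q‖ * ‖u‖ := by
    refine (real_inner_le_norm _ _).antisymm ?_
    rw [hu, mul_one, norm_neg, inner_neg_left]
    linarith
  have hsmul := inner_eq_norm_mul_iff_real.1 hqu_eq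
  rw [hu, one_smul, norm_neg] at hsmul
  rw [← NormedSpace.normalize_neg, NormedSpace.normalize, norm_neg, hsmul,
    inv_smul_smul₀ (norm_ne_zero_iff.2 hq0)]

end RecessionFunction

theorem gradient_descent_directional_convergence_general {E : Type*} [NormedAddCommGroup E]
    [InnerProductSpace ℝ E] [CompleteSpace E] {f : E → ℝ} {L : ℝ} (hL : 0 < L)
    (hconv : ConvexOn ℝ Set.univ f) (hdiff : Differentiable ℝ f)
    (hsmooth : ∀ y z, ‖gradient f y - gradient f z‖ ≤ L * ‖y - z‖)
    (hκ : 0 < ⨅ y, ‖gradient f y‖) {x : ℕ → E}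
    (hrec : ∀ i, x (i + 1) = x i - (1 / L) • gradient f (x i)) :
    Tendsto (fun i => ‖x i‖) atTop atTop ∧
    ∃ ξ : E, ‖ξ‖ = 1 ∧
      Tendsto (fun i => ‖x i‖⁻¹ • x i) atTop (nhds ξ) ∧
      recessionFunction f ξ = ((-(⨅ y, ‖gradient f y‖) : ℝ) : EReal) ∧
      ∀ u : E, ‖u‖ = 1 →
        recessionFunction f u ≤ ((-(⨅ y, ‖gradient f y‖) : ℝ) : EReal) → u = ξ := by
  obtain ⟨q, hq, hqκ, hmin⟩ :=
    exists_mem_closure_range_gradient_norm_eq_iInf hL hconv hdiff hsmooth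
  have hnorm := (isCocoercive_gradient hL hconv hdiff hsmooth).tendsto_norm_orbit
    (one_div_pos.2 hL) hrec
  rw [← hqκ] at hκ hnorm ⊢
  have hq0 : q ≠ 0 := norm_pos_iff.1 hκ
  have hgrad : Tendsto (fun i => gradient f (x i)) atTop (nhds q) :=
    tendsto_of_sq_norm_le_inner_of_tendsto_norm (fun i => hmin (x i)) hnorm
  have hdrift : Tendsto (fun i : ℕ => (i : ℝ)⁻¹ • x i) atTop (nhds ((1 / L) • -q)) := by
    refine tendsto_inv_smul_of_tendsto_sub ((hgrad.neg.const_smul (1 / L)).congr fun i => ?_)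
    rw [hrec, sub_sub_cancel_left, smul_neg]
  have hdrift0 : (1 / L) • -q ≠ 0 := smul_ne_zero (one_div_pos.2 hL).ne' (neg_ne_zero.2 hq0)
  have hdir := tendsto_normalize_of_tendsto_inv_smul hdrift0 hdrift
  rw [NormedSpace.normalize_smul_of_pos (one_div_pos.2 hL), NormedSpace.normalize_neg] at hdir
  exact ⟨tendsto_norm_atTop_of_tendsto_inv_smul hdrift0 hdrift, -NormedSpace.normalize q,
    (norm_neg _).trans (NormedSpace.norm_normalize_eq_one_iff.2 hq0), hdir,
    recessionFunction_neg_normalize_eq hconv hdiff hq hq0 hmin,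
    fun _ => eq_neg_normalize_of_recessionFunction_le hconv hdiff hq hq0⟩

/-- Directional convergence of gradient descent to the minimizer of the recession
function (Euclidean case of Theorem 3.7(2)): if `κ* := inf_y ‖∇f(y)‖ > 0` and `(x_i)`
is the gradient-descent sequence with step size `1/L`, then `‖x_i‖ → ∞` and
`x_i/‖x_i‖` converges to a unit vector `ξ*` with `f^∞(ξ*) = -κ*`, which is the
unique unit vector `u` with `f^∞(u) ≤ -κ*`. -/
theorem gradient_descent_directional_convergence {n : ℕ} (hn : 1 ≤ n)
    (f : EuclideanSpace ℝ (Fin n) → ℝ) (L : ℝ) (hL : 0 < L)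
    (hconv : ConvexOn ℝ Set.univ f) (hdiff : Differentiable ℝ f)
    (hsmooth : ∀ y z : EuclideanSpace ℝ (Fin n),
      ‖gradient f y - gradient f z‖ ≤ L * ‖y - z‖)
    (hκ : 0 < ⨅ y, ‖gradient f y‖)
    (x : ℕ → EuclideanSpace ℝ (Fin n))
    (hrec : ∀ i : ℕ, x (i + 1) = x i - (1 / L) • gradient f (x i)) :
    Tendsto (fun i => ‖x i‖) atTop atTop ∧
    ∃ ξ : EuclideanSpace ℝ (Fin n), ‖ξ‖ = 1 ∧
      Tendsto (fun i => ‖x i‖⁻¹ • x i) atTop (nhds ξ) ∧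
      recessionFn f ξ = ((-(⨅ y, ‖gradient f y‖) : ℝ) : EReal) ∧
      ∀ u : EuclideanSpace ℝ (Fin n), ‖u‖ = 1 →
        recessionFn f u ≤ ((-(⨅ y, ‖gradient f y‖) : ℝ) : EReal) → u = ξ := by
  exact gradient_descent_directional_convergence_general hL hconv hdiff hsmooth hκ hrec
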